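/- Let η* ∈ 𝓜 and let (x,y) ∈ 𝒜 with 0 < y < x (componentwise strict inequalities). For t ∈ ℝⁿ with −y < t < x − y and ε ≥ 0, define the measure η_{x,y,t,ε} on ℝ₊ⁿ × ℝ₊ⁿ by η_{x,y,t,ε}(A) = η*(A) − η*(A ∩ B_ε(x,y)) + η*((A − (0,t)) ∩ B_ε(x,y)), where B_ε(x,y) is the open ball of radius ε about (x,y) and A − (0,t) is the translate of A by −(0,t). Let δ = min{ d((x,y), ∂𝒜), d((x,y), ∂𝒜 − (0,t)) }. Then δ > 0, and for every 0 ≤ ε < δ the measure η_{x,y,t,ε} is again a reinsurance treaty, i.e. η_{x,y,t,ε} ∈ 𝓜. -/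

import Mathlib

/-!
The measure `η_{x,y,t,ε}` is the image of `η*` under the map that translates the ball `B_ε(x,y)` by
`(0,t)` and fixes every other point. This map preserves the first coordinate, hence the first
marginal. A ball about a point of `𝒜` whose radius is at most the distance to `∂𝒜` lies in `𝒜`,
being connected and disjoint from `∂𝒜`. Applied to the ball about `(x,y+t)`, this shows that
the map sends `𝒜` into itself, so full measure on `𝒜` is preserved as well.
-/

open MeasureTheory Filter Topology Set

noncomputable section

abbrev Vec (n : ℕ) : Type := Fin n → ℝ
abbrev Pt (n : ℕ) : Type := Vec n × Vec n

def treatySet (n : ℕ) : Set (Pt n) := {p | ∀ i, 0 ≤ p.2 i ∧ p.2 i ≤ p.1 i}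

def IsTreaty (n : ℕ) (μ : Measure (Vec n)) (η : Measure (Pt n)) : Prop :=
  IsProbabilityMeasure η ∧ η.map Prod.fst = μ ∧ η (treatySet n) = 1

section Frontier

theorem subset_of_isPreconnected_of_disjoint_frontier {X : Type*} [TopologicalSpace X]
    {s A : Set X} (hs : IsPreconnected s) (hd : Disjoint s (frontier A))
    (hne : (s ∩ A).Nonempty) : s ⊆ A := by
  have mem_interior_of_mem_closure : ∀ z ∈ s, z ∈ closure A → z ∈ interior A :=
    fun z hzs hzA => by_contra fun hz => disjoint_left.1 hd hzs ⟨hzA, hz⟩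
  obtain ⟨p, hps, hpA⟩ := hne
  have hsub : s ⊆ interior A := hs.subset_of_closure_inter_subset isOpen_interior
    ⟨p, hps, mem_interior_of_mem_closure p hps (subset_closure hpA)⟩
    fun z hz => mem_interior_of_mem_closure z hz.2 (closure_mono interior_subset hz.1)
  exact hsub.trans interior_subset

theorem ball_subset_of_le_infDist_frontier {E : Type*} [SeminormedAddCommGroup E]
    [NormedSpace ℝ E] {A : Set E} {p : E} {ε : ℝ} (hp : p ∈ A)
    (hε : ε ≤ Metric.infDist p (frontier A)) : Metric.ball p ε ⊆ A := by
  rcases le_or_gt ε 0 with hε0 | hε0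
  · simp only [Metric.ball_eq_empty.2 hε0, empty_subset]
  · exact subset_of_isPreconnected_of_disjoint_frontier (convex_ball p ε).isPreconnected
      (Metric.disjoint_ball_infDist.mono_left (Metric.ball_subset_ball hε))
      ⟨p, Metric.mem_ball_self hε0, hp⟩

theorem infDist_frontier_pos_of_mem_interior {X : Type*} [PseudoMetricSpace X]
    [PreconnectedSpace X] {A : Set X} {p : X} (hp : p ∈ interior A) (hA : A ≠ univ) :
    0 < Metric.infDist p (frontier A) :=
  (isClosed_frontier.notMem_iff_infDist_pos
    (nonempty_frontier_iff.2 ⟨⟨p, interior_subset hp⟩, hA⟩)).1 fun h => h.2 hp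

theorem infDist_image_sub_right {E : Type*} [SeminormedAddCommGroup E] (p v : E) (s : Set E) :
    Metric.infDist p ((fun q => q - v) '' s) = Metric.infDist (p + v) s := by
  conv_lhs => rw [← add_sub_cancel_right p v]
  exact Metric.infDist_image (IsometryEquiv.subRight v).isometry

end Frontier

section TreatySet

variable {n : ℕ}

theorem mem_interior_treatySet {p : Pt n} (h0 : ∀ i, 0 < p.2 i) (h1 : ∀ i, p.2 i < p.1 i) :
    p ∈ interior (treatySet n) := by
  have hopen : IsOpen {q : Pt n | ∀ i, 0 < q.2 i ∧ q.2 i < q.1 i} := by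
    simp only [ofPred_forall, ofPred_and]
    exact isOpen_iInter_of_finite fun i =>
      (isOpen_lt (by fun_prop) (by fun_prop)).inter (isOpen_lt (by fun_prop) (by fun_prop))
  exact interior_maximal (fun q hq i => ⟨(hq i).1.le, (hq i).2.le⟩) hopen fun i => ⟨h0 i, h1 i⟩

theorem treatySet_ne_univ (hn : 0 < n) : treatySet n ≠ univ := by
  intro h
  have hmem : ((0, 1) : Pt n) ∈ treatySet n := h ▸ mem_univ _
  exact zero_lt_one.not_ge (hmem ⟨0, hn⟩).2

theorem infDist_frontier_treatySet_pos (hn : 0 < n) {p : Pt n} (h0 : ∀ i, 0 < p.2 i)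
    (h1 : ∀ i, p.2 i < p.1 i) : 0 < Metric.infDist p (frontier (treatySet n)) :=
  infDist_frontier_pos_of_mem_interior (mem_interior_treatySet h0 h1) (treatySet_ne_univ hn)

end TreatySet

section Perturbation

open scoped Classical in
theorem map_piecewise_id_apply {α : Type*} [MeasurableSpace α] {η : Measure α} {B s : Set α}
    {f : α → α} (hf : Measurable f) (hB : MeasurableSet B) (hηB : η B ≠ ⊤)
    (hs : MeasurableSet s) :
    η.map (B.piecewise f id) s = η s - η (s ∩ B) + η (f ⁻¹' s ∩ B) := by
  have hdiff : η (s \ B) = η s - η (s ∩ B) := by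
    rw [← sdiff_inter_self_eq_sdiff, inter_comm B s,
      measure_sdiff inter_subset_left (hs.inter hB).nullMeasurableSet
        (measure_ne_top_of_subset inter_subset_right hηB)]
  rw [Measure.map_apply (hf.piecewise hB measurable_id) hs, piecewise_preimage, Set.ite,
    preimage_id, measure_union (disjoint_sdiff_right.mono_left inter_subset_right) (hs.diff hB),
    hdiff, add_comm]

variable {n : ℕ}

theorem IsTreaty.map {μ : Measure (Vec n)} {η : Measure (Pt n)} (hη : IsTreaty n μ η)
    {f : Pt n → Pt n} (hf : Measurable f) (hfst : ∀ p, (f p).1 = p.1)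
    (hmaps : MapsTo f (treatySet n) (treatySet n)) : IsTreaty n μ (η.map f) := by
  obtain ⟨hprob, hmarginal, hfull⟩ := hη
  have hprob' : IsProbabilityMeasure (η.map f) :=
    Measure.isProbabilityMeasure_map hf.aemeasurable
  refine ⟨hprob', ?_, prob_le_one.antisymm ?_⟩
  · rw [Measure.map_map measurable_fst hf, show Prod.fst ∘ f = Prod.fst from funext hfst,
      hmarginal]
  · calc 1 = η (treatySet n) := hfull.symm
      _ ≤ η (f ⁻¹' treatySet n) := measure_mono hmaps
      _ ≤ η.map f (treatySet n) := Measure.le_map_apply hf.aemeasurable _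

open scoped Classical in
/-- The perturbed measure `η_{x,y,t,ε}` for `p = (x,y)`, encoded as the image of `η` under the map
translating the ball of radius `ε` about `p` by `(0,t)` and fixing all other points. -/
def perturbation (η : Measure (Pt n)) (p : Pt n) (t : Vec n) (ε : ℝ) : Measure (Pt n) :=
  η.map ((Metric.ball p ε).piecewise (fun q => (q.1, q.2 + t)) id)

theorem perturbation_apply (η : Measure (Pt n)) [IsFiniteMeasure η] (p : Pt n) (t : Vec n)
    (ε : ℝ) {s : Set (Pt n)} (hs : MeasurableSet s) :
    perturbation η p t ε s = η s - η (s ∩ Metric.ball p ε)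
      + η ((fun q : Pt n => (q.1, q.2 + t)) ⁻¹' s ∩ Metric.ball p ε) :=
  map_piecewise_id_apply (by fun_prop) Metric.isOpen_ball.measurableSet (measure_ne_top _ _) hs

theorem IsTreaty.perturbation {μ : Measure (Vec n)} {η : Measure (Pt n)} (hη : IsTreaty n μ η)
    {p : Pt n} {t : Vec n} {ε : ℝ}
    (hball : Metric.ball (p.1, p.2 + t) ε ⊆ treatySet n) :
    IsTreaty n μ (perturbation η p t ε) := by
  classical
  refine hη.map (.piecewise Metric.isOpen_ball.measurableSet (by fun_prop) measurable_id) ?_ ?_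
  · intro q
    by_cases hq : q ∈ Metric.ball p ε
    · rw [piecewise_eq_of_mem _ _ _ hq]
    · rw [piecewise_eq_of_notMem _ _ _ hq, id]
  · intro q hqA
    by_cases hq : q ∈ Metric.ball p ε
    · rw [piecewise_eq_of_mem _ _ _ hq]
      have hdist : dist (q.1, q.2 + t) (p.1, p.2 + t) = dist q p := by
        simp only [Prod.dist_eq, dist_add_right]
      exact hball (Metric.mem_ball.2 (hdist.trans_lt hq))
    · rwa [piecewise_eq_of_notMem _ _ _ hq]

end Perturbation

theorem stmt4_general (n : ℕ) (hn : 0 < n) (μ : Measure (Vec n))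
    (ηs : Measure (Pt n)) (hηs : IsTreaty n μ ηs)
    (x y t : Vec n) (hy0 : ∀ i, 0 < y i) (hyx : ∀ i, y i < x i)
    (ht1 : ∀ i, -y i < t i) (ht2 : ∀ i, t i < x i - y i) :
    0 < min (Metric.infDist ((x, y) : Pt n) (frontier (treatySet n)))
        (Metric.infDist ((x, y) : Pt n)
          ((fun q : Pt n => q - (((0 : Vec n), t) : Pt n)) '' frontier (treatySet n))) ∧
    ∀ ε : ℝ, ε ≤ Metric.infDist ((x, y) : Pt n)
          ((fun q : Pt n => q - (((0 : Vec n), t) : Pt n)) '' frontier (treatySet n)) →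
      ∃ η' : Measure (Pt n), IsTreaty n μ η' ∧
        ∀ s : Set (Pt n), MeasurableSet s →
          η' s = ηs s - ηs (s ∩ Metric.ball ((x, y) : Pt n) ε)
            + ηs ((fun q : Pt n => (q.1, q.2 + t)) ⁻¹' s ∩ Metric.ball ((x, y) : Pt n) ε) := by
  have hy0' : ∀ i, 0 < (y + t) i := fun i => neg_lt_iff_pos_add'.1 (ht1 i)
  have hyx' : ∀ i, (y + t) i < x i := fun i => lt_sub_iff_add_lt'.1 (ht2 i)
  have hshift : ((x, y) : Pt n) + (0, t) = (x, y + t) := by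
    rw [Prod.mk_add_mk, add_zero]
  rw [infDist_image_sub_right, hshift]
  refine ⟨lt_min (infDist_frontier_treatySet_pos hn hy0 hyx)
    (infDist_frontier_treatySet_pos hn hy0' hyx'), fun ε hε => ?_⟩
  have hball : Metric.ball ((x, y + t) : Pt n) ε ⊆ treatySet n :=
    ball_subset_of_le_infDist_frontier (interior_subset (mem_interior_treatySet hy0' hyx')) hε
  have hprob : IsProbabilityMeasure ηs := hηs.1
  exact ⟨perturbation ηs (x, y) t ε, hηs.perturbation hball,
    fun _ hs => perturbation_apply ηs (x, y) t ε hs⟩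

/-- for `(x,y)` interior to `𝒜` (i.e. `0 < y < x` componentwise) and a
shift `t` with `−y < t < x − y`, setting
`δ = min( d((x,y), ∂𝒜), d((x,y), ∂𝒜 − (0,t)) )`, one has `δ > 0` and, for every
`0 ≤ ε < δ`, the perturbed measure
`η_{x,y,t,ε}(A) = η*(A) − η*(A ∩ B_ε(x,y)) + η*((A − (0,t)) ∩ B_ε(x,y))`
is again a reinsurance treaty. -/
theorem stmt4 (n : ℕ) (hn : 0 < n) (μ : Measure (Vec n)) [IsProbabilityMeasure μ]
    (ηs : Measure (Pt n)) (hηs : IsTreaty n μ ηs)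
    (x y t : Vec n) (hy0 : ∀ i, 0 < y i) (hyx : ∀ i, y i < x i)
    (ht1 : ∀ i, -y i < t i) (ht2 : ∀ i, t i < x i - y i) :
    0 < min (Metric.infDist ((x, y) : Pt n) (frontier (treatySet n)))
        (Metric.infDist ((x, y) : Pt n)
          ((fun q : Pt n => q - (((0 : Vec n), t) : Pt n)) '' frontier (treatySet n))) ∧
    ∀ ε : ℝ, 0 ≤ ε →
      ε < min (Metric.infDist ((x, y) : Pt n) (frontier (treatySet n)))
        (Metric.infDist ((x, y) : Pt n)
          ((fun q : Pt n => q - (((0 : Vec n), t) : Pt n)) '' frontier (treatySet n))) →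
      ∃ η' : Measure (Pt n), IsTreaty n μ η' ∧
        ∀ s : Set (Pt n), MeasurableSet s →
          η' s = ηs s - ηs (s ∩ Metric.ball ((x, y) : Pt n) ε)
            + ηs ((fun q : Pt n => (q.1, q.2 + t)) ⁻¹' s ∩ Metric.ball ((x, y) : Pt n) ε) := by
  obtain ⟨hδ, htreaty⟩ := stmt4_general n hn μ ηs hηs x y t hy0 hyx ht1 ht2
  exact ⟨hδ, fun ε _ hε => htreaty ε (hε.le.trans (min_le_right _ _))⟩
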